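/- Let q > 0, 0 < c < 1 and η ∈ ℝ. Then F_q(η) = (Γ(q+1)/2) ∫_{-∞}^∞ e^{η(c+it)} / ((c+it)^{q+1} sin(π(c+it))) dt, where (c+it)^{q+1} denotes the principal branch of the complex power. -/

import Mathlib

open Real MeasureTheory Set

/-- The standard Fermi-Dirac integral. -/
noncomputable def Fstd (q η : ℝ) : ℝ :=
  ∫ x in Ioi (0 : ℝ), x ^ q / (Real.exp (x - η) + 1)

/-!
By Euler's reflection formula `π / sin (π s)` is the Mellin transform of `1 / (1 + u)` on the strip
`0 < re s < 1`, so Mellin inversion at `u = exp y` writes the Fermi function `1 / (exp y + 1)` as a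
superposition of the exponentials `exp (-z y)` over the vertical line `re z = c`. Taking
`y = x - η` and integrating against `x ^ (s - 1)`, Fubini reduces the claim to the Gamma integral
`∫ x ^ (s - 1) exp (-z x) dx = Γ(s) / z ^ s`, whose extension to complex `z` is analytic
continuation from the positive reals.
-/

open scoped Topology

lemma bijOn_div_one_add {𝕜 : Type*} [Field 𝕜] [LinearOrder 𝕜] [IsStrictOrderedRing 𝕜] :
    BijOn (fun u : 𝕜 ↦ u / (1 + u)) (Ioi 0) (Ioo 0 1) := by
  refine InvOn.bijOn (f' := fun y ↦ y / (1 - y)) ⟨fun u hu ↦ ?_, fun y hy ↦ ?_⟩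
    (fun u hu ↦ ?_) (fun y hy ↦ ?_)
  · have h : 1 + u ≠ 0 := (add_pos one_pos hu).ne'
    field_simp
    simp
  · have h : 1 - y ≠ 0 := (sub_pos.2 hy.2).ne'
    field_simp
    simp
  · have h : 0 < 1 + u := add_pos one_pos hu
    exact ⟨div_pos hu h, (div_lt_one h).2 (lt_one_add u)⟩
  · exact div_pos hy.1 (sub_pos.2 hy.2)

lemma hasDerivAt_div_one_add {𝕜 : Type*} [NontriviallyNormedField 𝕜] {u : 𝕜} (hu : 1 + u ≠ 0) :
    HasDerivAt (fun u : 𝕜 ↦ u / (1 + u)) ((1 + u) ^ 2)⁻¹ u := by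
  convert! (hasDerivAt_id u).div ((hasDerivAt_id u).const_add 1) hu using 1
  simp

lemma betaIntegrand_comp_div_one_add (s t : ℂ) {u : ℝ} (hu : 0 < u) :
    |((1 + u) ^ 2)⁻¹| • (((u / (1 + u) : ℝ) : ℂ) ^ (s - 1) *
      (1 - ((u / (1 + u) : ℝ) : ℂ)) ^ (t - 1)) =
      (u : ℂ) ^ (s - 1) • ((1 + u : ℝ) : ℂ) ^ (-(s + t)) := by
  have h : (0 : ℝ) < 1 + u := by linarith
  have hne : ((1 + u : ℝ) : ℂ) ≠ 0 := Complex.ofReal_ne_zero.2 h.ne'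
  have inv_cpow (w : ℂ) : (((1 + u)⁻¹ : ℝ) : ℂ) ^ w = ((1 + u : ℝ) : ℂ) ^ (-w) := by
    rw [Complex.ofReal_inv, Complex.inv_cpow, Complex.cpow_neg]
    exact Complex.arg_ofReal_of_nonneg h.le ▸ pi_pos.ne
  have one_sub : 1 - ((u / (1 + u) : ℝ) : ℂ) = (((1 + u)⁻¹ : ℝ) : ℂ) := by
    rw [← Complex.ofReal_one, ← Complex.ofReal_sub]
    congr 1
    field_simp
    ring
  have jacobian : (((1 + u) ^ 2)⁻¹ : ℝ) = ((1 + u : ℝ) : ℂ) ^ (-2 : ℂ) := by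
    rw [Complex.cpow_neg, Complex.cpow_ofNat, Complex.ofReal_inv, Complex.ofReal_pow]
  rw [abs_of_pos (by positivity), Complex.real_smul, one_sub, div_eq_mul_inv, Complex.ofReal_mul,
    Complex.mul_cpow_ofReal_nonneg hu.le (inv_pos.2 h).le, inv_cpow, inv_cpow, jacobian,
    smul_eq_mul, show -(s + t) = -2 + -(s - 1) + -(t - 1) by ring, Complex.cpow_add _ _ hne,
    Complex.cpow_add _ _ hne]
  ring

lemma hasMellin_one_add_cpow_neg {s t : ℂ} (hs : 0 < s.re) (ht : 0 < t.re) :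
    HasMellin (fun u : ℝ ↦ ((1 + u : ℝ) : ℂ) ^ (-(s + t))) s (Complex.betaIntegral s t) := by
  have hderiv : ∀ u ∈ Ioi (0 : ℝ),
      HasDerivWithinAt (fun u : ℝ ↦ u / (1 + u)) ((1 + u) ^ 2)⁻¹ (Ioi 0) u := fun u hu ↦
    (hasDerivAt_div_one_add (add_pos one_pos hu).ne').hasDerivWithinAt
  have hbij := bijOn_div_one_add (𝕜 := ℝ)
  have hpull := fun u (hu : u ∈ Ioi (0 : ℝ)) ↦ betaIntegrand_comp_div_one_add s t hu
  constructor
  · have hB := Complex.betaIntegral_convergent hs ht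
    rw [intervalIntegrable_iff_integrableOn_Ioo_of_le zero_le_one, ← hbij.image_eq,
      integrableOn_image_iff_integrableOn_abs_deriv_smul measurableSet_Ioi hderiv hbij.injOn] at hB
    exact hB.congr_fun hpull measurableSet_Ioi
  · rw [Complex.betaIntegral, intervalIntegral.integral_of_le zero_le_one,
      integral_Ioc_eq_integral_Ioo, ← hbij.image_eq,
      integral_image_eq_integral_abs_deriv_smul measurableSet_Ioi hderiv hbij.injOn]
    exact (setIntegral_congr_fun measurableSet_Ioi hpull).symm

lemma hasMellin_inv_one_add {s : ℂ} (hs0 : 0 < s.re) (hs1 : s.re < 1) :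
    HasMellin (fun u : ℝ ↦ ((1 + u : ℝ) : ℂ)⁻¹) s (π / Complex.sin (π * s)) := by
  have hs1' : 0 < (1 - s).re := by simpa using hs1
  have hB : Complex.betaIntegral s (1 - s) = π / Complex.sin (π * s) := by
    rw [← Complex.Gamma_mul_Gamma_one_sub, Complex.Gamma_mul_Gamma_eq_betaIntegral hs0 hs1',
      add_sub_cancel, Complex.Gamma_one, one_mul]
  simpa only [hB, add_sub_cancel, Complex.cpow_neg_one] using hasMellin_one_add_cpow_neg hs0 hs1'

lemma one_add_sq_div_two_le_cosh (x : ℝ) : 1 + x ^ 2 / 2 ≤ Real.cosh x := by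
  have hsinh : |x / 2| ≤ |Real.sinh (x / 2)| := by
    rw [Real.abs_sinh]
    exact Real.self_le_sinh_iff.2 (abs_nonneg _)
  have hcosh : Real.cosh x = 1 + 2 * Real.sinh (x / 2) ^ 2 := by
    rw [← mul_div_cancel₀ x two_ne_zero, Real.cosh_two_mul, Real.cosh_sq]
    ring_nf
  rw [hcosh]
  linarith [sq_le_sq.2 hsinh]

lemma integrable_inv_cosh : Integrable fun x : ℝ ↦ (Real.cosh x)⁻¹ := by
  refine (integrable_inv_one_add_sq.const_mul 2).mono'
    (Real.continuous_cosh.inv₀ fun x ↦ (Real.cosh_pos x).ne').aestronglyMeasurable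
    (.of_forall fun x ↦ ?_)
  rw [Real.norm_of_nonneg (inv_nonneg.2 (Real.cosh_pos x).le)]
  calc (Real.cosh x)⁻¹ ≤ ((1 + x ^ 2) / 2)⁻¹ :=
        inv_anti₀ (by positivity) (by linarith [one_add_sq_div_two_le_cosh x])
    _ = 2 * (1 + x ^ 2)⁻¹ := by rw [inv_div, div_eq_mul_inv]

lemma abs_sin_re_mul_cosh_im_le_norm_sin (z : ℂ) :
    |Real.sin z.re| * Real.cosh z.im ≤ ‖Complex.sin z‖ := by
  have hre : (Complex.sin z).re = Real.sin z.re * Real.cosh z.im := by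
    rw [Complex.sin_eq]
    simp [← Complex.ofReal_sin, ← Complex.ofReal_cos, ← Complex.ofReal_cosh,
      ← Complex.ofReal_sinh]
  calc |Real.sin z.re| * Real.cosh z.im = |(Complex.sin z).re| := by
        rw [hre, abs_mul, abs_of_pos (Real.cosh_pos _)]
    _ ≤ ‖Complex.sin z‖ := Complex.abs_re_le_norm _

lemma verticalIntegrable_inv_sin_pi_mul {c : ℝ} (hc : Real.sin (π * c) ≠ 0) :
    Complex.VerticalIntegrable (fun s ↦ (Complex.sin (π * s))⁻¹) c := by
  have hbound (t : ℝ) : |Real.sin (π * c)| * Real.cosh (π * t) ≤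
      ‖Complex.sin (π * (c + t * Complex.I))‖ := by
    simpa using abs_sin_re_mul_cosh_im_le_norm_sin (π * (c + t * Complex.I))
  have hpos (t : ℝ) : 0 < |Real.sin (π * c)| * Real.cosh (π * t) :=
    mul_pos (abs_pos.2 hc) (Real.cosh_pos _)
  refine ((integrable_inv_cosh.comp_mul_left' pi_ne_zero).const_mul |Real.sin (π * c)|⁻¹).mono'
    (Continuous.aestronglyMeasurable ?_) (.of_forall fun t ↦ ?_)
  · exact Continuous.inv₀ (by fun_prop) fun t ↦ norm_pos_iff.1 ((hpos t).trans_le (hbound t))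
  · rw [norm_inv, ← mul_inv]
    exact inv_anti₀ (hpos t) (hbound t)

lemma sin_pi_mul_pos {c : ℝ} (hc0 : 0 < c) (hc1 : c < 1) : 0 < Real.sin (π * c) :=
  Real.sin_pos_of_pos_of_lt_pi (mul_pos pi_pos hc0) (mul_lt_of_lt_one_right pi_pos hc1)

lemma verticalIntegrable_cexp_mul_div_sin_pi_mul (η : ℝ) {c : ℝ} (hc : Real.sin (π * c) ≠ 0) :
    Complex.VerticalIntegrable (fun s ↦ Complex.exp (η * s) / Complex.sin (π * s)) c := by
  simp only [div_eq_mul_inv]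
  refine (verticalIntegrable_inv_sin_pi_mul hc).bdd_mul (c := Real.exp (η * c))
    (Continuous.aestronglyMeasurable (by fun_prop)) (.of_forall fun t ↦ ?_)
  simp [Complex.norm_exp]

lemma integral_cexp_neg_mul_div_sin_pi_mul {c : ℝ} (hc0 : 0 < c) (hc1 : c < 1) (y : ℝ) :
    ∫ t : ℝ, Complex.exp (-((c + t * Complex.I) * y)) / Complex.sin (π * (c + t * Complex.I)) =
      2 * ((Real.exp y + 1 : ℝ) : ℂ)⁻¹ := by
  let f : ℝ → ℂ := fun u ↦ ((1 + u : ℝ) : ℂ)⁻¹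
  have hmellin (t : ℝ) : HasMellin f (c + t * Complex.I)
      (π * (Complex.sin (π * (c + t * Complex.I)))⁻¹) := by
    simpa only [div_eq_mul_inv] using
      hasMellin_inv_one_add (s := c + t * Complex.I) (by simpa using hc0) (by simpa using hc1)
  have hconv : MellinConvergent f c := by simpa using (hmellin 0).1
  have hvert : Complex.VerticalIntegrable (mellin f) c := by
    simp only [Complex.VerticalIntegrable, (hmellin _).2]
    exact (verticalIntegrable_inv_sin_pi_mul (sin_pi_mul_pos hc0 hc1).ne').const_mul _
  have hcont : ContinuousAt f (Real.exp y) :=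
    ContinuousAt.inv₀ (by fun_prop) (Complex.ofReal_ne_zero.2 (by positivity))
  have hcpow (z : ℂ) : ((Real.exp y : ℝ) : ℂ) ^ (-z) = Complex.exp (-(z * y)) := by
    rw [Complex.cpow_def_of_ne_zero (Complex.ofReal_ne_zero.2 (Real.exp_ne_zero y)),
      ← Complex.ofReal_log (Real.exp_pos y).le, Real.log_exp, mul_neg, mul_comm]
  have hinv : (π : ℂ)⁻¹ * ∫ t : ℝ, ((Real.exp y : ℝ) : ℂ) ^ (-(c + t * Complex.I)) •
      mellin f (c + t * Complex.I) = 2 * f (Real.exp y) := by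
    rw [← mellinInv_mellin_eq c f (Real.exp_pos y) hconv hvert hcont, mellinInv, Complex.real_smul]
    push_cast
    ring
  have hpi : (π : ℂ) ≠ 0 := Complex.ofReal_ne_zero.2 pi_ne_zero
  rw [add_comm, ← hinv, ← integral_const_mul]
  refine integral_congr_ae (.of_forall fun t ↦ ?_)
  simp only [(hmellin t).2, hcpow, smul_eq_mul]
  field_simp

lemma norm_cpow_mul_cexp_neg_mul {x : ℝ} (hx : 0 < x) (s z : ℂ) :
    ‖(x : ℂ) ^ s * Complex.exp (-(z * x))‖ = x ^ s.re * Real.exp (-z.re * x) := by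
  rw [norm_mul, Complex.norm_cpow_eq_rpow_re_of_pos hx, Complex.norm_exp]
  simp

lemma integrableOn_rpow_mul_exp_neg_mul {a b : ℝ} (ha : -1 < a) (hb : 0 < b) :
    IntegrableOn (fun x : ℝ ↦ x ^ a * Real.exp (-b * x)) (Ioi 0) := by
  simpa using integrableOn_rpow_mul_exp_neg_mul_rpow ha one_pos hb

lemma mellinConvergent_cexp_neg_mul {s z : ℂ} (hs : 0 < s.re) (hz : 0 < z.re) :
    MellinConvergent (fun x : ℝ ↦ Complex.exp (-(z * x))) s := by
  refine (integrableOn_rpow_mul_exp_neg_mul (a := (s - 1).re) (by simpa using hs) hz).mono'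
    (by fun_prop) ?_
  filter_upwards [ae_restrict_mem measurableSet_Ioi] with x hx
  exact (norm_cpow_mul_cexp_neg_mul hx _ _).le

lemma hasDerivAt_mellin_cexp_neg_mul {s z : ℂ} (hs : 0 < s.re) (hz : 0 < z.re) :
    HasDerivAt (fun w : ℂ ↦ mellin (fun x : ℝ ↦ Complex.exp (-(w * x))) s)
      (-mellin (fun x : ℝ ↦ Complex.exp (-(z * x))) (s + 1)) z := by
  have hnhds : {w : ℂ | z.re / 2 < w.re} ∈ 𝓝 z :=
    (isOpen_lt continuous_const Complex.continuous_re).mem_nhds (half_lt_self hz)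
  rw [mellin, ← integral_neg]
  refine (hasDerivAt_integral_of_dominated_loc_of_deriv_le
    (F := fun w (x : ℝ) ↦ (x : ℂ) ^ (s - 1) • Complex.exp (-(w * x)))
    (F' := fun w x ↦ -((x : ℂ) ^ (s + 1 - 1) • Complex.exp (-(w * x))))
    (bound := fun x ↦ x ^ s.re * Real.exp (-(z.re / 2) * x)) hnhds
    (.of_forall fun w ↦ by fun_prop) (mellinConvergent_cexp_neg_mul hs hz) (by fun_prop) ?_
    (integrableOn_rpow_mul_exp_neg_mul (by linarith) (half_pos hz)) ?_).2
  · filter_upwards [ae_restrict_mem measurableSet_Ioi] with x (hx : 0 < x) w hw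
    rw [norm_neg, smul_eq_mul, norm_cpow_mul_cexp_neg_mul hx, add_sub_cancel_right]
    have hexp : -w.re * x ≤ -(z.re / 2) * x :=
      mul_le_mul_of_nonneg_right (neg_le_neg (le_of_lt hw)) hx.le
    exact mul_le_mul_of_nonneg_left (Real.exp_le_exp.2 hexp) (by positivity)
  · filter_upwards [ae_restrict_mem measurableSet_Ioi] with x hx w _
    have hx : (x : ℂ) ≠ 0 := Complex.ofReal_ne_zero.2 (ne_of_gt hx)
    convert! ((((hasDerivAt_id w).mul_const (x : ℂ)).neg).cexp).const_mul ((x : ℂ) ^ (s - 1))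
      using 1
    rw [add_sub_right_comm, Complex.cpow_add _ _ hx, Complex.cpow_one]
    simp only [smul_eq_mul, id_eq, Pi.neg_apply, one_mul, mul_neg, neg_inj]
    ring

lemma eqOn_re_pos_of_eq_ofReal {E : Type*} [NormedAddCommGroup E] [NormedSpace ℂ E]
    [CompleteSpace E] {f g : ℂ → E} (hf : DifferentiableOn ℂ f {z | 0 < z.re})
    (hg : DifferentiableOn ℂ g {z | 0 < z.re}) (hfg : ∀ x : ℝ, 0 < x → f x = g x) :
    EqOn f g {z | 0 < z.re} := by
  have hopen : IsOpen {z : ℂ | 0 < z.re} := isOpen_lt continuous_const Complex.continuous_re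
  refine (hf.analyticOnNhd hopen).eqOn_of_preconnected_of_frequently_eq (hg.analyticOnNhd hopen)
    (convex_halfSpace_re_gt 0).isPreconnected (z₀ := ((1 : ℝ) : ℂ)) (by simp) ?_
  have hlim : Filter.Tendsto ((↑) : ℝ → ℂ) (𝓝[≠] 1) (𝓝[≠] ((1 : ℝ) : ℂ)) :=
    Complex.continuous_ofReal.continuousWithinAt.tendsto_nhdsWithin fun _ hx ↦
      Complex.ofReal_injective.ne hx
  have hpos : ∀ᶠ x : ℝ in 𝓝[≠] 1, 0 < x := nhdsWithin_le_nhds (Ioi_mem_nhds one_pos)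
  exact hlim.frequently (hpos.mono hfg).frequently

lemma hasMellin_cexp_neg_mul {s z : ℂ} (hs : 0 < s.re) (hz : 0 < z.re) :
    HasMellin (fun x : ℝ ↦ Complex.exp (-(z * x))) s (Complex.Gamma s / z ^ s) := by
  refine ⟨mellinConvergent_cexp_neg_mul hs hz, eqOn_re_pos_of_eq_ofReal
    (f := fun z ↦ mellin (fun x : ℝ ↦ Complex.exp (-(z * x))) s)
    (g := fun z ↦ Complex.Gamma s / z ^ s) (fun w hw ↦ ?_) (fun w hw ↦ ?_) (fun b hb ↦ ?_) hz⟩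
  · exact (hasDerivAt_mellin_cexp_neg_mul hs hw).differentiableAt.differentiableWithinAt
  · have hw : w ∈ Complex.slitPlane := .inl hw
    exact ((differentiableAt_const _).div (differentiableAt_id.cpow_const hw)
      (Complex.cpow_ne_zero_iff.2 (.inl (Complex.slitPlane_ne_zero hw)))).differentiableWithinAt
  · have harg : (b : ℂ).arg ≠ π := Complex.arg_ofReal_of_nonneg hb.le ▸ pi_pos.ne
    simp only [mellin, smul_eq_mul]
    rw [Complex.integral_cpow_mul_exp_neg_mul_Ioi hs hb, one_div, Complex.inv_cpow _ _ harg,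
      inv_mul_eq_div]

lemma mellin_integral_cexp_neg_mul {α : Type*} [MeasurableSpace α] {μ : Measure α} [SFinite μ]
    {z g : α → ℂ} {c : ℝ} {s : ℂ} (hc : 0 < c) (hz : AEStronglyMeasurable z μ)
    (hcz : ∀ a, c ≤ (z a).re) (hg : Integrable g μ) (hs : 0 < s.re) :
    mellin (fun x : ℝ ↦ ∫ a, Complex.exp (-(z a * x)) * g a ∂μ) s =
      Complex.Gamma s * ∫ a, g a / z a ^ s ∂μ := by
  let K : ℝ → α → ℂ := fun x a ↦ (x : ℂ) ^ (s - 1) * Complex.exp (-(z a * x)) * g a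
  have hmeas : AEStronglyMeasurable K.uncurry ((volume.restrict (Ioi 0)).prod μ) := by
    have hexp : AEStronglyMeasurable (fun p : ℝ × α ↦ Complex.exp (-(z p.2 * p.1)))
        ((volume.restrict (Ioi 0)).prod μ) :=
      Complex.continuous_exp.comp_aestronglyMeasurable
        (hz.comp_snd.mul (Measurable.aestronglyMeasurable (by fun_prop))).neg
    exact (Measurable.aestronglyMeasurable (by fun_prop) |>.mul hexp).mul hg.1.comp_snd
  have hK : Integrable K.uncurry ((volume.restrict (Ioi 0)).prod μ) := by
    have hdom := (integrableOn_rpow_mul_exp_neg_mul (a := (s - 1).re) (by simpa using hs)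
      hc).mul_prod hg.norm
    refine hdom.mono' hmeas ?_
    filter_upwards [Measure.quasiMeasurePreserving_fst.ae (ae_restrict_mem measurableSet_Ioi)]
      with ⟨x, a⟩ (hx : 0 < x)
    simp only [K, Function.uncurry_apply_pair]
    rw [norm_mul, norm_cpow_mul_cexp_neg_mul hx]
    gcongr
    exact hcz a
  calc mellin (fun x : ℝ ↦ ∫ a, Complex.exp (-(z a * x)) * g a ∂μ) s
      = ∫ x in Ioi 0, ∫ a, K x a ∂μ := by
        simp only [mellin, smul_eq_mul, K, mul_assoc, integral_const_mul]
    _ = ∫ a, ∫ x in Ioi (0 : ℝ), K x a ∂volume ∂μ := integral_integral_swap hK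
    _ = ∫ a, Complex.Gamma s * (g a / z a ^ s) ∂μ := by
        refine integral_congr_ae (.of_forall fun a ↦ ?_)
        have hGamma := (hasMellin_cexp_neg_mul hs (hc.trans_le (hcz a))).2
        simp only [mellin, smul_eq_mul] at hGamma
        simp only [K, integral_mul_const, hGamma, div_mul_eq_mul_div, mul_div_assoc]
    _ = Complex.Gamma s * ∫ a, g a / z a ^ s ∂μ := integral_const_mul _ _

lemma ofReal_Fstd (q η : ℝ) :
    (Fstd q η : ℂ) = mellin (fun x : ℝ ↦ ((Real.exp (x - η) + 1 : ℝ) : ℂ)⁻¹) (q + 1) := by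
  rw [Fstd, mellin, ← integral_complex_ofReal]
  refine setIntegral_congr_fun measurableSet_Ioi fun x (hx : 0 < x) ↦ ?_
  rw [add_sub_cancel_right, smul_eq_mul, ← div_eq_mul_inv, ← Complex.ofReal_cpow hx.le,
    Complex.ofReal_div]

theorem stmt3_general {s : ℂ} {c : ℝ} (η : ℝ) (hs : 0 < s.re) (hc0 : 0 < c) (hc1 : c < 1) :
    mellin (fun x : ℝ ↦ ((Real.exp (x - η) + 1 : ℝ) : ℂ)⁻¹) s = Complex.Gamma s / 2 *
      ∫ t : ℝ, Complex.exp (η * (c + t * Complex.I)) /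
        ((c + t * Complex.I) ^ s * Complex.sin (π * (c + t * Complex.I))) := by
  let z : ℝ → ℂ := fun t ↦ c + t * Complex.I
  let g : ℝ → ℂ := fun t ↦ Complex.exp (η * z t) / Complex.sin (π * z t)
  have hz : Continuous z := by fun_prop
  have hg : Integrable g :=
    verticalIntegrable_cexp_mul_div_sin_pi_mul η (sin_pi_mul_pos hc0 hc1).ne'
  have hfermi (x : ℝ) : ((Real.exp (x - η) + 1 : ℝ) : ℂ)⁻¹ =
      (2 : ℂ)⁻¹ • ∫ t, Complex.exp (-(z t * x)) * g t := by
    rw [smul_eq_mul, eq_inv_mul_iff_mul_eq₀ two_ne_zero,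
      ← integral_cexp_neg_mul_div_sin_pi_mul hc0 hc1]
    refine integral_congr_ae (.of_forall fun t ↦ ?_)
    simp only [g, z, ← mul_div_assoc, ← Complex.exp_add]
    push_cast
    ring_nf
  calc mellin (fun x : ℝ ↦ ((Real.exp (x - η) + 1 : ℝ) : ℂ)⁻¹) s
      = (2 : ℂ)⁻¹ * mellin (fun x : ℝ ↦ ∫ t, Complex.exp (-(z t * x)) * g t) s := by
        simp only [hfermi]
        exact mellin_const_smul _ _ _
    _ = (2 : ℂ)⁻¹ * (Complex.Gamma s * ∫ t, g t / z t ^ s) := by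
        rw [mellin_integral_cexp_neg_mul hc0 hz.aestronglyMeasurable (by simp [z]) hg hs]
    _ = Complex.Gamma s / 2 * ∫ t, Complex.exp (η * z t) / (z t ^ s * Complex.sin (π * z t)) := by
        simp only [g, div_mul_eq_div_div_swap]
        ring

theorem stmt3 (q c η : ℝ) (hq : 0 < q) (hc0 : 0 < c) (hc1 : c < 1) :
    (Fstd q η : ℂ) = ((Real.Gamma (q + 1) : ℂ) / 2) *
      ∫ t : ℝ, Complex.exp ((η : ℂ) * ((c : ℂ) + t * Complex.I)) /
        (((c : ℂ) + t * Complex.I) ^ ((q : ℂ) + 1) *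
          Complex.sin ((π : ℂ) * ((c : ℂ) + t * Complex.I))) := by
  rw [ofReal_Fstd, stmt3_general η (by simp; linarith) hc0 hc1, ← Complex.Gamma_ofReal,
    Complex.ofReal_add, Complex.ofReal_one]
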